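/- Let b > 0, let q : ℝ → ℂ be continuous on [−b,b], let f solve f'' − q f = 0 on [−b,b] with f(0) = 1, f'(0) = 0, and assume f(x) ≠ 0 on [−b,b]. Then there exists a continuous function K on {(x,t) : |t| ≤ |x| ≤ b} such that (i) for every twice continuously differentiable u : [−b,b] → ℂ, the function (Tu)(x) = u(x) + ∫_{−x}^{x} K(x,t)u(t)dt satisfies (Tu)'' − q·(Tu) = T(u'') on [−b,b], and (ii) for every integer n ≥ 0 and every x ∈ (0,b], ∫_{−x}^{x} K(x,y) H_n(y) dy = Σ_{k=0}^{n} h_{k,n}·(φ_k(x) − x^k) = √π · n! · 2ⁿ · c_n(x). -/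

import Mathlib

open MeasureTheory Set Filter Finset Complex Topology

noncomputable section

/-- The iterated integrals X⁽ⁿ⁾: X⁽⁰⁾ ≡ 1, X⁽ⁿ⁾(x) = n ∫₀ˣ X⁽ⁿ⁻¹⁾(s) (f(s)²)^((−1)ⁿ) ds. -/
def formalX (f : ℝ → ℂ) : ℕ → ℝ → ℂ
  | 0 => fun _ => 1
  | n + 1 => fun x =>
      (n + 1 : ℂ) * ∫ s in (0:ℝ)..x, formalX f n s * ((f s) ^ 2) ^ ((-1 : ℤ) ^ (n + 1))

/-- The iterated integrals X̃⁽ⁿ⁾: X̃⁽⁰⁾ ≡ 1, X̃⁽ⁿ⁾(x) = n ∫₀ˣ X̃⁽ⁿ⁻¹⁾(s) (f(s)²)^((−1)^(n−1)) ds. -/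
def formalXt (f : ℝ → ℂ) : ℕ → ℝ → ℂ
  | 0 => fun _ => 1
  | n + 1 => fun x =>
      (n + 1 : ℂ) * ∫ s in (0:ℝ)..x, formalXt f n s * ((f s) ^ 2) ^ ((-1 : ℤ) ^ n)

/-- The formal powers φₖ: φₖ = f·X⁽ᵏ⁾ for odd k, φₖ = f·X̃⁽ᵏ⁾ for even k. -/
def formalPower (f : ℝ → ℂ) (k : ℕ) (x : ℝ) : ℂ :=
  if Odd k then f x * formalX f k x else f x * formalXt f k x

/-- The physicists' Hermite polynomials: H₀ = 1, Hₙ₊₁ = 2x·Hₙ − Hₙ'. -/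
def hermitePhys : ℕ → Polynomial ℝ
  | 0 => 1
  | n + 1 => 2 * Polynomial.X * hermitePhys n - Polynomial.derivative (hermitePhys n)

/-- cₙ(x) = (1/(√π n! 2ⁿ)) Σₖ h_{k,n} (φₖ(x) − xᵏ), h_{k,n} the coefficient of yᵏ in Hₙ. -/
def cCoef (f : ℝ → ℂ) (n : ℕ) (x : ℝ) : ℂ :=
  (1 / ((Real.sqrt Real.pi : ℂ) * n.factorial * 2 ^ n)) *
    ∑ k ∈ Finset.range (n + 1), ((hermitePhys n).coeff k : ℂ) * (formalPower f k x - (x : ℂ) ^ k)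

/-!
For smooth `q` the kernel `K` solves the wave equation `K_xx - K_tt = q(x) K` with Goursat data
`K(x, x) = (∫₀ˣ q) / 2` and `K(x, -x) = 0`. In characteristic coordinates this is a Volterra
integral equation that makes sense for continuous `q`, and its Neumann series converges in a
Bielecki-weighted supremum norm.

For merely continuous `q` the kernel is only `C¹`, so `(Tu)''` cannot be found by differentiating
`K` twice. Instead the derivative of `∫_{-x}^x K(x, t) u(t) dt` is written as Duhamel's integral
`∫₀ˣ q(s) T[cosh((x - s) D) u](s) ds`, in which the second derivative falls on `u`.

Since `T` intertwines `D²` and `D² - q`, the functions `T[tᵏ]` obey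
`(D² - q) T[tᵏ⁺²] = (k + 2)(k + 1) T[tᵏ]`. Reduction of order with respect to `f` turns this into
the recursion defining the formal powers, so that `T[tᵏ] = φₖ`; linearity gives the Hermite moments.

The two-sided derivatives at `±b` involve values of `K` with `|x| > b`, where `K` is defined by odd
reflection in the endpoints.
-/

open Function (uncurry)

section Calculus

variable {X E : Type*} [TopologicalSpace X] [NormedAddCommGroup E]
  [NormedSpace ℝ E]

@[fun_prop]
theorem continuous_intervalIntegral_of_continuous_limits {μ : Measure ℝ}
    [IsLocallyFiniteMeasure μ] [NullSingletonClass μ] {F : X → ℝ → E} (hF : Continuous (uncurry F))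
    {a b : X → ℝ} (ha : Continuous a) (hb : Continuous b) :
    Continuous fun x => ∫ t in (a x)..(b x), F x t ∂μ := by
  have hint (x : X) (c d : ℝ) : IntervalIntegrable (F x) μ c d :=
    Continuous.intervalIntegrable (by fun_prop) c d
  have hsub (x : X) : ∫ t in (a x)..(b x), F x t ∂μ =
      (∫ t in (0 : ℝ)..(b x), F x t ∂μ) - ∫ t in (0 : ℝ)..(a x), F x t ∂μ :=
    (intervalIntegral.integral_interval_sub_left (hint x _ _) (hint x _ _)).symm
  simp only [hsub]
  fun_prop

theorem hasDerivAt_integral_param {F F' : ℝ → ℝ → E} (hF : ∀ x, Continuous (F x))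
    (hF' : Continuous (uncurry F')) (hderiv : ∀ x t, HasDerivAt (F · t) (F' x t) x)
    (a b x : ℝ) :
    HasDerivAt (fun x => ∫ t in a..b, F x t) (∫ t in a..b, F' x t) x := by
  obtain ⟨C, hC⟩ := ((isCompact_closedBall x 1).prod
    (isCompact_uIcc (a := a) (b := b))).exists_bound_of_continuousOn hF'.continuousOn
  refine (intervalIntegral.hasDerivAt_integral_of_dominated_loc_of_deriv_le (bound := fun _ => C)
    (Metric.closedBall_mem_nhds x one_pos) (.of_forall fun y => (hF y).aestronglyMeasurable)
    ((hF x).intervalIntegrable _ _)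
    (Continuous.aestronglyMeasurable (by fun_prop)) (.of_forall fun t ht y hy => ?_)
    intervalIntegrable_const (.of_forall fun t _ y _ => hderiv y t)).2
  exact hC (y, t) ⟨hy, uIoc_subset_uIcc ht⟩

theorem eq_of_hasDerivAt_eq {f g f' : ℝ → E} (hf : ∀ x, HasDerivAt f (f' x) x)
    (hg : ∀ x, HasDerivAt g (f' x) x) {a : ℝ} (ha : f a = g a) : f = g :=
  eq_of_fderiv_eq (𝕜 := ℝ) (fun x => (hf x).differentiableAt) (fun x => (hg x).differentiableAt)
    (fun x => by rw [(hf x).hasFDerivAt.fderiv, (hg x).hasFDerivAt.fderiv]) a ha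

theorem integral_neg_self_eq_two_smul (g : ℝ → E) (x : ℝ) :
    ∫ t in (-x)..x, g t = (2 : ℝ) • ∫ σ in (0 : ℝ)..x, g (2 * σ - x) := by
  rw [intervalIntegral.smul_integral_comp_mul_sub]
  congr 1 <;> ring

variable [CompleteSpace E]

theorem hasDerivAt_integral_leibniz_right {F F' : ℝ → ℝ → E} (hF : Continuous (uncurry F))
    (hF' : Continuous (uncurry F')) (hderiv : ∀ x t, HasDerivAt (F · t) (F' x t) x)
    (a : ℝ) {b : ℝ → ℝ} {b' x : ℝ} (hb : HasDerivAt b b' x) :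
    HasDerivAt (fun x => ∫ t in a..(b x), F x t)
      (b' • F x (b x) + ∫ t in a..(b x), F' x t) x := by
  have hparam (v : ℝ × ℝ) :
      HasDerivAt (fun z => ∫ t in a..v.1, F z t) (∫ t in a..v.1, F' v.2 t) v.2 :=
    hasDerivAt_integral_param (fun x => by fun_prop) hF' hderiv a v.1 v.2
  have hlimit (v : ℝ × ℝ) : HasDerivAt (fun y => ∫ t in a..y, F v.2 t) (F v.2 v.1) v.1 :=
    (Continuous.integral_hasStrictDerivAt (by fun_prop) a v.1).hasDerivAt
  have hstrict := hasStrictFDerivAt_uncurry_coprod (𝕜 := ℝ) (u := (b x, x))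
    (f := fun y z => ∫ t in a..y, F z t)
    (f₁ := fun y z => .toSpanSingleton ℝ (F z y))
    (f₂ := fun y z => .toSpanSingleton ℝ (∫ t in a..y, F' z t))
    (.of_forall fun v => (hlimit v).hasFDerivAt) (.of_forall fun v => (hparam v).hasFDerivAt)
    (((ContinuousLinearMap.toSpanSingletonCLE (𝕜 := ℝ) (E := E)).continuous.comp
      (by fun_prop : Continuous fun v : ℝ × ℝ => F v.2 v.1)).continuousAt)
    (((ContinuousLinearMap.toSpanSingletonCLE (𝕜 := ℝ) (E := E)).continuous.comp
      (by fun_prop : Continuous fun v : ℝ × ℝ => ∫ t in a..v.1, F' v.2 t)).continuousAt)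
  simpa [Function.comp_def, Function.HasUncurry.uncurry] using
    HasFDerivAt.comp_hasDerivAt (f := fun x => (b x, x)) x hstrict.hasFDerivAt
      (hb.prodMk (hasDerivAt_id' x))

theorem hasDerivAt_integral_leibniz {F F' : ℝ → ℝ → E} (hF : Continuous (uncurry F))
    (hF' : Continuous (uncurry F')) (hderiv : ∀ x t, HasDerivAt (F · t) (F' x t) x)
    {a b : ℝ → ℝ} {a' b' x : ℝ} (ha : HasDerivAt a a' x) (hb : HasDerivAt b b' x) :
    HasDerivAt (fun x => ∫ t in (a x)..(b x), F x t)
      (b' • F x (b x) - a' • F x (a x) + ∫ t in (a x)..(b x), F' x t) x := by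
  have hsub {G : ℝ → ℝ → E} (hG : Continuous (uncurry G)) (x : ℝ) :
      ∫ t in (a x)..(b x), G x t = (∫ t in (0 : ℝ)..(b x), G x t) - ∫ t in (0 : ℝ)..(a x), G x t :=
    (intervalIntegral.integral_interval_sub_left
      (Continuous.intervalIntegrable (by fun_prop) _ _)
      (Continuous.intervalIntegrable (by fun_prop) _ _)).symm
  rw [funext (hsub hF), hsub hF', sub_add_sub_comm]
  exact (hasDerivAt_integral_leibniz_right hF hF' hderiv 0 hb).sub
    (hasDerivAt_integral_leibniz_right hF hF' hderiv 0 ha)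

theorem integral_triangle_swap {F : ℝ → ℝ → E} (hF : Continuous (uncurry F)) (a x : ℝ) :
    ∫ s in a..x, ∫ t in s..x, F s t = ∫ t in a..x, ∫ s in a..t, F s t := by
  refine congrFun (eq_of_hasDerivAt_eq (f := fun x => ∫ s in a..x, ∫ t in s..x, F s t)
    (f' := fun x => ∫ s in a..x, F s x) (a := a) (fun x => ?_)
    (fun x => (Continuous.integral_hasStrictDerivAt (by fun_prop) a x).hasDerivAt) (by simp)) x
  simpa using hasDerivAt_integral_leibniz_right (F := fun x s => ∫ t in s..x, F s t)
    (F' := fun x s => F s x) (by fun_prop) (by fun_prop)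
    (fun x s => (Continuous.integral_hasStrictDerivAt (by fun_prop) s x).hasDerivAt) a
    (hasDerivAt_id x)

theorem integral_characteristic_triangle {F : ℝ → ℝ → E} (hF : Continuous (uncurry F)) (x : ℝ) :
    ∫ t in (-x)..x, ∫ s in ((x + t) / 2)..x, F s (t + (x - s)) =
      ∫ s in (0 : ℝ)..x, ∫ t in (-s)..s, F s t := by
  have hσ (σ s : ℝ) : 2 * σ - x + (x - s) = 2 * σ - s := by ring
  simp only [integral_neg_self_eq_two_smul, intervalIntegral.integral_smul, hσ,
    add_sub_cancel, mul_div_cancel_left₀ _ (two_ne_zero' ℝ)]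
  rw [integral_triangle_swap (F := fun σ s => F s (2 * σ - s)) (by fun_prop)]

theorem integral_characteristic_triangle_reflected {F : ℝ → ℝ → E} (hF : Continuous (uncurry F))
    (x : ℝ) :
    ∫ t in (-x)..x, ∫ s in ((x - t) / 2)..x, F s (t - (x - s)) =
      ∫ s in (0 : ℝ)..x, ∫ t in (-s)..s, F s t := by
  have hneg (g : ℝ → E) (y : ℝ) : ∫ t in (-y)..y, g (-t) = ∫ t in (-y)..y, g t := by simp
  rw [← hneg]
  simp only [← hneg (F _)]
  rw [← integral_characteristic_triangle (F := fun s t => F s (-t)) (by fun_prop)]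
  simp only [sub_neg_eq_add, neg_add, ← sub_eq_add_neg]

end Calculus

section Volterra

theorem norm_integral_le_of_norm_le_exp {E : Type*} [NormedAddCommGroup E] [NormedSpace ℝ E]
    {g : ℝ → E} {C l : ℝ} (hl : 0 < l) (hg : ∀ t, ‖g t‖ ≤ C * Real.exp (l * |t|)) (x : ℝ) :
    ‖∫ t in (0 : ℝ)..x, g t‖ ≤ C / l * Real.exp (l * |x|) := by
  wlog hx : 0 ≤ x generalizing g x
  · have hreflect := this (g := fun t => g (-t)) (fun t => by simpa using hg (-t)) (-x)
      (by linarith)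
    rwa [intervalIntegral.integral_comp_neg, neg_neg, neg_zero, intervalIntegral.integral_symm,
      norm_neg, abs_neg] at hreflect
  have hC : 0 ≤ C := by simpa using (norm_nonneg _).trans (hg 0)
  have hexp : ∫ t in (0 : ℝ)..x, C * Real.exp (l * t) = C / l * (Real.exp (l * x) - 1) := by
    rw [intervalIntegral.integral_const_mul, intervalIntegral.integral_comp_mul_left _ hl.ne']
    simp [div_eq_mul_inv, mul_assoc]
  calc ‖∫ t in (0 : ℝ)..x, g t‖
      ≤ ∫ t in (0 : ℝ)..x, C * Real.exp (l * t) :=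
        intervalIntegral.norm_integral_le_of_norm_le hx
          (.of_forall fun t ht => by simpa [abs_of_pos ht.1] using hg t)
          (Continuous.intervalIntegrable (by fun_prop) _ _)
    _ ≤ C / l * Real.exp (l * |x|) := by
        rw [hexp, abs_of_nonneg hx]
        gcongr
        linarith

/-- The weight `exp (l * |x|) * exp (l * |y|)` of Bielecki's norm: dividing by it makes a
two-variable Volterra operator with bounded coefficient a contraction once `l` is large. -/
def bieleckiWeight (l x y : ℝ) : ℝ :=
  Real.exp (l * |x|) * Real.exp (l * |y|)

theorem bieleckiWeight_pos (l x y : ℝ) : 0 < bieleckiWeight l x y := by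
  unfold bieleckiWeight
  positivity

@[fun_prop]
theorem continuous_bieleckiWeight (l : ℝ) : Continuous (uncurry (bieleckiWeight l)) := by
  unfold bieleckiWeight
  fun_prop

theorem norm_integral_integral_le_of_norm_le_bieleckiWeight {E : Type*} [NormedAddCommGroup E]
    [NormedSpace ℝ E] {F : ℝ → ℝ → E} {C l : ℝ} (hl : 0 < l)
    (hF : ∀ x y, ‖F x y‖ ≤ C * bieleckiWeight l x y) (x y : ℝ) :
    ‖∫ s in (0 : ℝ)..x, ∫ t in (0 : ℝ)..y, F s t‖ ≤ C / l ^ 2 * bieleckiWeight l x y := by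
  have hinner (s : ℝ) : ‖∫ t in (0 : ℝ)..y, F s t‖ ≤
      C / l * Real.exp (l * |y|) * Real.exp (l * |s|) :=
    (norm_integral_le_of_norm_le_exp (C := C * Real.exp (l * |s|)) hl
      (fun t => (hF s t).trans_eq (mul_assoc _ _ _).symm) y).trans_eq (by ring)
  exact (norm_integral_le_of_norm_le_exp hl hinner x).trans_eq
    (by unfold bieleckiWeight; field_simp)

variable {𝔸 : Type*} [NormedRing 𝔸] [NormedAlgebra ℝ 𝔸] {a : ℝ → ℝ → 𝔸} {M l : ℝ}

open scoped BoundedContinuousFunction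

theorem norm_integral_integral_mul_bieleckiWeight_smul_le (haM : ∀ x y, ‖a x y‖ ≤ M) (hl : 0 < l)
    (G : ℝ × ℝ →ᵇ 𝔸) (x y : ℝ) :
    ‖∫ s in (0 : ℝ)..x, ∫ t in (0 : ℝ)..y, a s t * bieleckiWeight l s t • G (s, t)‖ ≤
      M * ‖G‖ / l ^ 2 * bieleckiWeight l x y := by
  refine norm_integral_integral_le_of_norm_le_bieleckiWeight hl (fun s t => ?_) x y
  calc ‖a s t * bieleckiWeight l s t • G (s, t)‖
      ≤ ‖a s t‖ * (bieleckiWeight l s t * ‖G (s, t)‖) := by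
        simpa [norm_smul, abs_of_pos (bieleckiWeight_pos l s t)] using
          norm_mul_le (a s t) (bieleckiWeight l s t • G (s, t))
    _ ≤ M * (bieleckiWeight l s t * ‖G‖) := by
        have hM : 0 ≤ M := (norm_nonneg _).trans (haM s t)
        have hW := bieleckiWeight_pos l s t
        gcongr
        exacts [haM s t, G.norm_coe_le_norm _]
    _ = M * ‖G‖ * bieleckiWeight l s t := by ring

theorem exists_weighted_volterra_operator (ha : Continuous (uncurry a)) (haM : ∀ x y, ‖a x y‖ ≤ M)
    (hl : 0 < l) :
    ∃ L : (ℝ × ℝ →ᵇ 𝔸) →L[ℝ] (ℝ × ℝ →ᵇ 𝔸), ‖L‖ ≤ M / l ^ 2 ∧ ∀ G x y, L G (x, y) =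
      (bieleckiWeight l x y)⁻¹ •
        ∫ s in (0 : ℝ)..x, ∫ t in (0 : ℝ)..y, a s t * bieleckiWeight l s t • G (s, t) := by
  have hM : 0 ≤ M := (norm_nonneg _).trans (haM 0 0)
  have hW (p : ℝ × ℝ) : bieleckiWeight l p.1 p.2 ≠ 0 := (bieleckiWeight_pos l p.1 p.2).ne'
  let T (G : ℝ × ℝ →ᵇ 𝔸) (p : ℝ × ℝ) : 𝔸 := (bieleckiWeight l p.1 p.2)⁻¹ •
    ∫ s in (0 : ℝ)..p.1, ∫ t in (0 : ℝ)..p.2, a s t * bieleckiWeight l s t • G (s, t)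
  have hcont (G : ℝ × ℝ →ᵇ 𝔸) : Continuous (T G) := by fun_prop (disch := exact hW)
  have hbound (G : ℝ × ℝ →ᵇ 𝔸) (p : ℝ × ℝ) : ‖T G p‖ ≤ M / l ^ 2 * ‖G‖ := by
    rw [norm_smul, norm_inv, Real.norm_of_nonneg (bieleckiWeight_pos l _ _).le,
      inv_mul_le_iff₀ (bieleckiWeight_pos l _ _)]
    exact (norm_integral_integral_mul_bieleckiWeight_smul_le haM hl G _ _).trans_eq (by ring)
  have hadd (G₁ G₂ : ℝ × ℝ →ᵇ 𝔸) (p : ℝ × ℝ) : T (G₁ + G₂) p = T G₁ p + T G₂ p := by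
    have hint {F : ℝ → 𝔸} (hF : Continuous F) (y : ℝ) : IntervalIntegrable F volume 0 y :=
      hF.intervalIntegrable _ _
    simp only [T, BoundedContinuousFunction.coe_add, Pi.add_apply, smul_add, mul_add]
    rw [← smul_add, ← intervalIntegral.integral_add (hint (by fun_prop) _) (hint (by fun_prop) _)]
    congr 2 with s
    exact intervalIntegral.integral_add (hint (by fun_prop) _) (hint (by fun_prop) _)
  let L : (ℝ × ℝ →ᵇ 𝔸) →ₗ[ℝ] (ℝ × ℝ →ᵇ 𝔸) :=
    { toFun := fun G => .ofNormedAddCommGroup (T G) (hcont G) _ (hbound G)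
      map_add' := fun G₁ G₂ => by ext p; exact hadd G₁ G₂ p
      map_smul' := fun c G => by ext p; simp [T, smul_comm _ c] }
  exact ⟨L.mkContinuous (M / l ^ 2) fun G =>
      BoundedContinuousFunction.norm_ofNormedAddCommGroup_le _ (by positivity) (hbound G),
    L.mkContinuous_norm_le (by positivity) _, fun G x y => rfl⟩

theorem exists_continuous_eq_add_integral_integral [CompleteSpace 𝔸] (ha : Continuous (uncurry a))
    (haM : ∀ x y, ‖a x y‖ ≤ M) (hl : 0 < l) (hMl : M < l ^ 2) {g : ℝ → ℝ → 𝔸}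
    (hg : Continuous (uncurry g)) {C : ℝ} (hgC : ∀ x y, ‖g x y‖ ≤ C * bieleckiWeight l x y) :
    ∃ H : ℝ → ℝ → 𝔸, Continuous (uncurry H) ∧ ∀ x y,
      H x y = g x y + ∫ s in (0 : ℝ)..x, ∫ t in (0 : ℝ)..y, a s t * H s t := by
  obtain ⟨L, hLnorm, hL⟩ := exists_weighted_volterra_operator ha haM hl
  have hLlt : ‖L‖ < 1 := hLnorm.trans_lt ((div_lt_one (by positivity)).2 hMl)
  have hW (p : ℝ × ℝ) : bieleckiWeight l p.1 p.2 ≠ 0 := (bieleckiWeight_pos l p.1 p.2).ne'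
  let G₀ : ℝ × ℝ →ᵇ 𝔸 := .ofNormedAddCommGroup
    (fun p => (bieleckiWeight l p.1 p.2)⁻¹ • g p.1 p.2) (by fun_prop (disch := exact hW)) C
    fun p => by
      rw [norm_smul, norm_inv, Real.norm_of_nonneg (bieleckiWeight_pos l _ _).le,
        inv_mul_le_iff₀ (bieleckiWeight_pos l _ _), mul_comm]
      exact hgC p.1 p.2
  let G : ℝ × ℝ →ᵇ 𝔸 := (↑(Units.oneSub L hLlt)⁻¹ : (ℝ × ℝ →ᵇ 𝔸) →L[ℝ] (ℝ × ℝ →ᵇ 𝔸)) G₀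
  have hG : G - L G = G₀ :=
    congrArg (fun A : (ℝ × ℝ →ᵇ 𝔸) →L[ℝ] (ℝ × ℝ →ᵇ 𝔸) => A G₀) (Units.oneSub L hLlt).mul_inv
  refine ⟨fun x y => bieleckiWeight l x y • G (x, y), by fun_prop, fun x y => ?_⟩
  have hGxy : G (x, y) = G₀ (x, y) + L G (x, y) := by rw [← hG]; simp
  beta_reduce
  rw [hGxy, smul_add, hL, smul_inv_smul₀ (hW (x, y))]
  congr 1
  exact smul_inv_smul₀ (hW (x, y)) _

end Volterra

section Goursat

variable {q : ℝ → ℂ} {H : ℝ → ℝ → ℂ}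

/-- `H` solves the Goursat problem of the transmutation kernel in the characteristic coordinates
`ξ = (x + t) / 2` and `η = (x - t) / 2`, in integrated form. For smooth `q` it says
`∂_ξ ∂_η H = q (ξ + η) H`, `H ξ 0 = (∫ s in 0..ξ, q s) / 2` and `H 0 η = 0`. -/
structure IsGoursatSolution (q : ℝ → ℂ) (H : ℝ → ℝ → ℂ) : Prop where
  continuous : Continuous (uncurry H)
  eq_integral (ξ η : ℝ) : H ξ η = (1 / 2) * (∫ s in (0 : ℝ)..ξ, q s) +
    ∫ α in (0 : ℝ)..ξ, ∫ β in (0 : ℝ)..η, q (α + β) * H α β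

theorem exists_isGoursatSolution (hq : Continuous q) {M : ℝ} (hM : ∀ x, ‖q x‖ ≤ M) :
    ∃ H, IsGoursatSolution q H := by
  have hM₀ : 0 ≤ M := (norm_nonneg _).trans (hM 0)
  have hforcing (ξ η : ℝ) : ‖(1 / 2) * ∫ s in (0 : ℝ)..ξ, q s‖ ≤
      M / (M + 1) * bieleckiWeight (M + 1) ξ η := by
    have hexp := norm_integral_le_of_norm_le_exp (g := q) (C := M) (l := M + 1) (by positivity)
      (fun t => (hM t).trans (le_mul_of_one_le_right hM₀ (Real.one_le_exp (by positivity)))) ξ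
    calc ‖(1 / 2) * ∫ s in (0 : ℝ)..ξ, q s‖
        ≤ ‖∫ s in (0 : ℝ)..ξ, q s‖ := by
          rw [norm_mul]
          exact mul_le_of_le_one_left (norm_nonneg _) (by norm_num)
      _ ≤ M / (M + 1) * (Real.exp ((M + 1) * |ξ|) * 1) := by rwa [mul_one]
      _ ≤ M / (M + 1) * bieleckiWeight (M + 1) ξ η := by
          unfold bieleckiWeight
          gcongr
          exact Real.one_le_exp (by positivity)
  obtain ⟨H, hH, hH_eq⟩ := exists_continuous_eq_add_integral_integral
    (a := fun α β => q (α + β)) (by fun_prop) (fun α β => hM (α + β)) (by positivity)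
    (by nlinarith) (g := fun ξ _ => (1 / 2) * ∫ s in (0 : ℝ)..ξ, q s) (by fun_prop) hforcing
  exact ⟨H, hH, hH_eq⟩

/-- The kernel `K x t` read off from a function of the characteristic coordinates. -/
def goursatKernel (H : ℝ → ℝ → ℂ) (x t : ℝ) : ℂ :=
  H ((x + t) / 2) ((x - t) / 2)

theorem integral_mul_goursatKernel_add (q : ℝ → ℂ) (H : ℝ → ℝ → ℂ) (x t : ℝ) :
    ∫ β in (0 : ℝ)..((x - t) / 2), q ((x + t) / 2 + β) * H ((x + t) / 2) β =
      ∫ s in ((x + t) / 2)..x, q s * goursatKernel H s (t + (x - s)) := by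
  convert intervalIntegral.integral_comp_add_left
    (fun s => q s * goursatKernel H s (t + (x - s))) ((x + t) / 2) using 2
  · ext β
    simp only [goursatKernel]
    ring_nf
  · ring
  · ring

theorem integral_mul_goursatKernel_sub (q : ℝ → ℂ) (H : ℝ → ℝ → ℂ) (x t : ℝ) :
    ∫ α in (0 : ℝ)..((x + t) / 2), q (α + (x - t) / 2) * H α ((x - t) / 2) =
      ∫ s in ((x - t) / 2)..x, q s * goursatKernel H s (t - (x - s)) := by
  convert intervalIntegral.integral_comp_add_right
    (fun s => q s * goursatKernel H s (t - (x - s))) ((x - t) / 2) using 2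
  · ext α
    simp only [goursatKernel]
    ring_nf
  · ring
  · ring

namespace IsGoursatSolution

variable (hH : IsGoursatSolution q H)
include hH

theorem continuous_goursatKernel : Continuous (uncurry (goursatKernel H)) := by
  have := hH.continuous
  unfold goursatKernel
  fun_prop

theorem goursatKernel_self (x : ℝ) : goursatKernel H x x = (1 / 2) * ∫ s in (0 : ℝ)..x, q s := by
  rw [goursatKernel, hH.eq_integral]
  simp

theorem goursatKernel_neg (x : ℝ) : goursatKernel H x (-x) = 0 := by
  rw [goursatKernel, hH.eq_integral]
  simp

theorem hasDerivAt_goursatKernel (hq : Continuous q) (x t : ℝ) :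
    HasDerivAt (fun x => goursatKernel H x t)
      ((1 / 4) * q ((x + t) / 2) + (1 / 2) *
        ((∫ s in ((x + t) / 2)..x, q s * goursatKernel H s (t + (x - s))) +
          ∫ s in ((x - t) / 2)..x, q s * goursatKernel H s (t - (x - s)))) x := by
  have hHc := hH.continuous
  have hξ : HasDerivAt (fun x : ℝ => (x + t) / 2) (1 / 2) x :=
    ((hasDerivAt_id x).add_const t).div_const 2
  have hη (x : ℝ) : HasDerivAt (fun x : ℝ => (x - t) / 2) (1 / 2) x :=
    ((hasDerivAt_id x).sub_const t).div_const 2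
  have hforcing : HasDerivAt (fun x => ∫ s in (0 : ℝ)..((x + t) / 2), q s)
      ((1 / 2 : ℝ) • q ((x + t) / 2)) x :=
    (hq.integral_hasStrictDerivAt 0 _).hasDerivAt.scomp x hξ
  have hinner (x α : ℝ) : HasDerivAt (fun x => ∫ β in (0 : ℝ)..((x - t) / 2), q (α + β) * H α β)
      ((1 / 2 : ℝ) • (q (α + (x - t) / 2) * H α ((x - t) / 2))) x :=
    (Continuous.integral_hasStrictDerivAt (by fun_prop) 0 _).hasDerivAt.scomp x (hη x)
  have houter := hasDerivAt_integral_leibniz_right (by fun_prop) (by fun_prop) hinner 0 hξ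
  refine (((hforcing.const_mul (1 / 2)).add houter).congr_deriv ?_).congr_of_eventuallyEq
    (.of_forall fun x => hH.eq_integral _ _)
  rw [← integral_mul_goursatKernel_add, ← integral_mul_goursatKernel_sub,
    intervalIntegral.integral_smul]
  simp only [Complex.real_smul]
  push_cast
  ring

end IsGoursatSolution

end Goursat

section Transmutation

/-- The Volterra part of the transmutation operator with kernel `K`. -/
def volterra (K : ℝ → ℝ → ℂ) (u : ℝ → ℂ) (x : ℝ) : ℂ :=
  ∫ t in (-x)..x, K x t * u t

/-- The transmutation operator with kernel `K`. -/
def transmute (K : ℝ → ℝ → ℂ) (u : ℝ → ℂ) (x : ℝ) : ℂ :=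
  u x + volterra K u x

/-- D'Alembert's solution `cosh (y D) u` of the wave equation with initial position `u` and
initial velocity `0`. -/
def evenShift (u : ℝ → ℂ) (y t : ℝ) : ℂ :=
  (u (t + y) + u (t - y)) / 2

/-- D'Alembert's `sinh (y D) u`, the companion of `evenShift`: each is the `y`-derivative of the
other applied to `u'`. -/
def oddShift (u : ℝ → ℂ) (y t : ℝ) : ℂ :=
  (u (t + y) - u (t - y)) / 2

/-- Duhamel's integral of the source terms `q s * transmute K (F (x - s)) s`. -/
def duhamel (q : ℝ → ℂ) (K F : ℝ → ℝ → ℂ) (x : ℝ) : ℂ :=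
  ∫ s in (0 : ℝ)..x, q s * transmute K (F (x - s)) s

variable {K F F' H : ℝ → ℝ → ℂ} {q u u' u'' : ℝ → ℂ}

@[fun_prop]
theorem continuous_evenShift (hu : Continuous u) : Continuous (uncurry (evenShift u)) := by
  unfold evenShift
  fun_prop

@[fun_prop]
theorem continuous_oddShift (hu : Continuous u) : Continuous (uncurry (oddShift u)) := by
  unfold oddShift
  fun_prop

theorem evenShift_zero (u : ℝ → ℂ) : evenShift u 0 = u := by
  ext t
  simp [evenShift]

theorem oddShift_zero (u : ℝ → ℂ) : oddShift u 0 = 0 := by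
  ext t
  simp [oddShift]

theorem hasDerivAt_evenShift (hu : ∀ x, HasDerivAt u (u' x) x) (y t : ℝ) :
    HasDerivAt (evenShift u · t) (oddShift u' y t) y :=
  (((hu _).comp_const_add t y).add ((hu _).comp_const_sub t y)).div_const 2

theorem hasDerivAt_oddShift (hu : ∀ x, HasDerivAt u (u' x) x) (y t : ℝ) :
    HasDerivAt (oddShift u · t) (evenShift u' y t) y :=
  (((hu _).comp_const_add t y).sub ((hu _).comp_const_sub t y)).div_const 2 |>.congr_deriv
    (by rw [sub_neg_eq_add, evenShift])

@[fun_prop]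
theorem continuous_transmute {X : Type*} [TopologicalSpace X] {G : X → ℝ → ℂ} {s : X → ℝ}
    (hK : Continuous (uncurry K)) (hG : Continuous (uncurry G)) (hs : Continuous s) :
    Continuous fun x => transmute K (G x) (s x) := by
  unfold transmute volterra
  fun_prop

theorem hasDerivAt_transmute_param (hK : Continuous (uncurry K)) (hF : Continuous (uncurry F))
    (hF' : Continuous (uncurry F')) (hderiv : ∀ y t, HasDerivAt (F · t) (F' y t) y) (x y : ℝ) :
    HasDerivAt (fun y => transmute K (F y) x) (transmute K (F' y) x) y :=
  (hderiv y x).add (hasDerivAt_integral_param (by fun_prop) (by fun_prop)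
    (fun y t => (hderiv y t).const_mul (K x t)) (-x) x y)

theorem hasDerivAt_duhamel (hq : Continuous q) (hK : Continuous (uncurry K))
    (hF : Continuous (uncurry F)) (hF' : Continuous (uncurry F'))
    (hderiv : ∀ y t, HasDerivAt (F · t) (F' y t) y) (x : ℝ) :
    HasDerivAt (duhamel q K F) (q x * transmute K (F 0) x + duhamel q K F' x) x := by
  have hT (x s : ℝ) : HasDerivAt (fun x => q s * transmute K (F (x - s)) s)
      (q s * transmute K (F' (x - s)) s) x :=
    ((hasDerivAt_transmute_param hK hF hF' hderiv s (x - s)).comp_sub_const x s).const_mul (q s)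
  exact (hasDerivAt_integral_leibniz_right (by fun_prop) (by fun_prop) hT 0
    (hasDerivAt_id x)).congr_deriv (by simp [duhamel])

theorem duhamel_evenShift (hK : Continuous (uncurry K)) (hq : Continuous q) (hu : Continuous u)
    (x : ℝ) :
    duhamel q K (evenShift u) x =
      (1 / 2) * (∫ s in (0 : ℝ)..x, q s) * u x +
      (1 / 2) * (∫ s in (0 : ℝ)..x, q s * u (2 * s - x)) +
      (1 / 2) * (∫ s in (0 : ℝ)..x, ∫ t in (-s)..s, q s * K s t * u (t - (x - s))) +
      (1 / 2) * ∫ s in (0 : ℝ)..x, ∫ t in (-s)..s, q s * K s t * u (t + (x - s)) := by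
  have hint {g : ℝ → ℂ} (hg : Continuous g) (a b : ℝ) : IntervalIntegrable g volume a b :=
    hg.intervalIntegrable a b
  have hsource (s : ℝ) : q s * transmute K (evenShift u (x - s)) s =
      (1 / 2) * (q s * u x) + (1 / 2) * (q s * u (2 * s - x)) +
      (1 / 2) * (∫ t in (-s)..s, q s * K s t * u (t - (x - s))) +
      (1 / 2) * ∫ t in (-s)..s, q s * K s t * u (t + (x - s)) := by
    have hsplit : ∫ t in (-s)..s, K s t * evenShift u (x - s) t =
        (1 / 2) * (∫ t in (-s)..s, K s t * u (t - (x - s))) +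
        (1 / 2) * ∫ t in (-s)..s, K s t * u (t + (x - s)) := by
      simp only [← intervalIntegral.integral_const_mul]
      rw [← intervalIntegral.integral_add (hint (by fun_prop) _ _) (hint (by fun_prop) _ _)]
      congr with t
      unfold evenShift
      ring
    simp only [transmute, volterra, hsplit, mul_assoc, intervalIntegral.integral_const_mul]
    rw [evenShift, add_sub_cancel, show s - (x - s) = 2 * s - x by ring]
    ring
  simp only [duhamel, hsource]
  rw [intervalIntegral.integral_add (hint (by fun_prop) _ _) (hint (by fun_prop) _ _),
    intervalIntegral.integral_add (hint (by fun_prop) _ _) (hint (by fun_prop) _ _),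
    intervalIntegral.integral_add (hint (by fun_prop) _ _) (hint (by fun_prop) _ _)]
  simp only [intervalIntegral.integral_const_mul, intervalIntegral.integral_mul_const, mul_assoc]

namespace IsGoursatSolution

theorem integral_deriv_goursatKernel_mul (hH : IsGoursatSolution q H) (hq : Continuous q)
    (hu : Continuous u) (x : ℝ) :
    ∫ t in (-x)..x, ((1 / 4) * q ((x + t) / 2) + (1 / 2) *
        ((∫ s in ((x + t) / 2)..x, q s * goursatKernel H s (t + (x - s))) +
          ∫ s in ((x - t) / 2)..x, q s * goursatKernel H s (t - (x - s)))) * u t =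
      (1 / 2) * (∫ s in (0 : ℝ)..x, q s * u (2 * s - x)) +
      (1 / 2) * (∫ s in (0 : ℝ)..x, ∫ t in (-s)..s, q s * goursatKernel H s t * u (t - (x - s))) +
      (1 / 2) * ∫ s in (0 : ℝ)..x, ∫ t in (-s)..s,
        q s * goursatKernel H s t * u (t + (x - s)) := by
  have := hH.continuous_goursatKernel
  have hdiagonal : ∫ t in (-x)..x, q ((x + t) / 2) * u t =
      2 * ∫ s in (0 : ℝ)..x, q s * u (2 * s - x) := by
    simpa using integral_neg_self_eq_two_smul (fun t => q ((x + t) / 2) * u t) x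
  have hint {g : ℝ → ℂ} (hg : Continuous g) : IntervalIntegrable g volume (-x) x :=
    hg.intervalIntegrable _ _
  have hintegrand (t : ℝ) : ((1 / 4) * q ((x + t) / 2) + (1 / 2) *
        ((∫ s in ((x + t) / 2)..x, q s * goursatKernel H s (t + (x - s))) +
          ∫ s in ((x - t) / 2)..x, q s * goursatKernel H s (t - (x - s)))) * u t =
      (1 / 4) * (q ((x + t) / 2) * u t) +
      (1 / 2) * (∫ s in ((x + t) / 2)..x, q s * goursatKernel H s (t + (x - s)) * u t) +
      (1 / 2) * ∫ s in ((x - t) / 2)..x, q s * goursatKernel H s (t - (x - s)) * u t := by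
    simp only [intervalIntegral.integral_mul_const]
    ring
  rw [← integral_characteristic_triangle (by fun_prop),
    ← integral_characteristic_triangle_reflected (by fun_prop)]
  simp only [add_sub_cancel_right, sub_add_cancel, hintegrand]
  rw [intervalIntegral.integral_add (hint (by fun_prop)) (hint (by fun_prop)),
    intervalIntegral.integral_add (hint (by fun_prop)) (hint (by fun_prop))]
  simp only [intervalIntegral.integral_const_mul, hdiagonal]
  ring

theorem hasDerivAt_volterra (hH : IsGoursatSolution q H) (hq : Continuous q) (hu : Continuous u)
    (x : ℝ) :
    HasDerivAt (volterra (goursatKernel H) u)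
      (duhamel q (goursatKernel H) (evenShift u) x) x := by
  have hK := hH.continuous_goursatKernel
  refine (hasDerivAt_integral_leibniz (by fun_prop) (by fun_prop)
    (fun x t => (hH.hasDerivAt_goursatKernel hq x t).mul_const (u t))
    (hasDerivAt_neg x) (hasDerivAt_id x)).congr_deriv ?_
  rw [id, hH.integral_deriv_goursatKernel_mul hq hu, duhamel_evenShift hK hq hu,
    hH.goursatKernel_self, hH.goursatKernel_neg]
  simp only [one_smul, zero_mul, smul_zero, sub_zero]
  ring

theorem hasDerivAt_duhamel_evenShift (hH : IsGoursatSolution q H) (hq : Continuous q)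
    (hu : ∀ x, HasDerivAt u (u' x) x) (hu' : ∀ x, HasDerivAt u' (u'' x) x)
    (hu'' : Continuous u'') (x : ℝ) :
    HasDerivAt (duhamel q (goursatKernel H) (evenShift u))
      (q x * transmute (goursatKernel H) u x + volterra (goursatKernel H) u'' x) x := by
  have hK := hH.continuous_goursatKernel
  have hu_cont : Continuous u := continuous_iff_continuousAt.2 fun x => (hu x).continuousAt
  have hu'_cont : Continuous u' := continuous_iff_continuousAt.2 fun x => (hu' x).continuousAt
  have hodd (x : ℝ) : HasDerivAt (duhamel q (goursatKernel H) (oddShift u'))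
      (duhamel q (goursatKernel H) (evenShift u'') x) x := by
    simpa [oddShift_zero, transmute, volterra] using hasDerivAt_duhamel hq hK
      (continuous_oddShift hu'_cont) (continuous_evenShift hu'') (hasDerivAt_oddShift hu') x
  have hvolterra : duhamel q (goursatKernel H) (oddShift u') = volterra (goursatKernel H) u'' :=
    eq_of_hasDerivAt_eq hodd (hH.hasDerivAt_volterra hq hu'') (a := 0)
      (by simp [duhamel, volterra])
  simpa [evenShift_zero, hvolterra] using hasDerivAt_duhamel hq hK
    (continuous_evenShift hu_cont) (continuous_oddShift hu'_cont) (hasDerivAt_evenShift hu) x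

theorem hasDerivAt_transmute (hH : IsGoursatSolution q H) (hq : Continuous q)
    (hu : ∀ x, HasDerivAt u (u' x) x) (x : ℝ) :
    HasDerivAt (transmute (goursatKernel H) u)
      (u' x + duhamel q (goursatKernel H) (evenShift u) x) x :=
  (hu x).add (hH.hasDerivAt_volterra hq
    (continuous_iff_continuousAt.2 fun x => (hu x).continuousAt) x)

theorem hasDerivAt_deriv_transmute (hH : IsGoursatSolution q H) (hq : Continuous q)
    (hu : ∀ x, HasDerivAt u (u' x) x) (hu' : ∀ x, HasDerivAt u' (u'' x) x)
    (hu'' : Continuous u'') (x : ℝ) :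
    HasDerivAt (fun x => u' x + duhamel q (goursatKernel H) (evenShift u) x)
      (q x * transmute (goursatKernel H) u x + transmute (goursatKernel H) u'' x) x :=
  ((hu' x).add (hH.hasDerivAt_duhamel_evenShift hq hu hu' hu'' x)).congr_deriv
    (add_left_comm _ _ _)

end IsGoursatSolution

end Transmutation

section FormalPowers

theorem eq_mul_integral_of_hasDerivAt {𝕜 : Type*} [RCLike 𝕜] {s : Set ℝ} (hs : s.OrdConnected)
    {a x : ℝ} (ha : a ∈ s) (hx : x ∈ s) {q f f' P P' R : ℝ → 𝕜}
    (hf : ∀ x ∈ s, HasDerivAt f (f' x) x) (hf' : ∀ x ∈ s, HasDerivAt f' (q x * f x) x)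
    (hf_ne : ∀ x ∈ s, f x ≠ 0) (hP : ∀ x ∈ s, HasDerivAt P (P' x) x)
    (hP' : ∀ x ∈ s, HasDerivAt P' (q x * P x + R x) x) (hR : ContinuousOn R s) :
    P x = f x * (P a / f a +
      ∫ r in a..x, (P' a * f a - P a * f' a + ∫ t in a..r, R t * f t) / f r ^ 2) := by
  have hf_cont : ContinuousOn f s := fun x hx => (hf x hx).continuousAt.continuousWithinAt
  have hf'_cont : ContinuousOn f' s := fun x hx => (hf' x hx).continuousAt.continuousWithinAt
  have hP_cont : ContinuousOn P s := fun x hx => (hP x hx).continuousAt.continuousWithinAt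
  have hP'_cont : ContinuousOn P' s := fun x hx => (hP' x hx).continuousAt.continuousWithinAt
  have hsub {x : ℝ} (hx : x ∈ s) : uIcc a x ⊆ s := hs.uIcc_subset ha hx
  have hwronskian' {r : ℝ} (hr : r ∈ s) :
      HasDerivAt (fun r => P' r * f r - P r * f' r) (R r * f r) r :=
    (((hP' r hr).mul (hf r hr)).sub ((hP r hr).mul (hf' r hr))).congr_deriv (by ring)
  have hwronskian {r : ℝ} (hr : r ∈ s) :
      P' r * f r - P r * f' r = P' a * f a - P a * f' a + ∫ t in a..r, R t * f t :=
    eq_add_of_sub_eq' (intervalIntegral.integral_eq_sub_of_hasDerivAt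
      (fun t ht => hwronskian' (hsub hr ht))
      ((hR.mul hf_cont).mono (hsub hr)).intervalIntegrable).symm
  have hquotient : ∫ r in a..x, (P' r * f r - P r * f' r) / f r ^ 2 = P x / f x - P a / f a :=
    intervalIntegral.integral_eq_sub_of_hasDerivAt
      (fun r hr => (hP r (hsub hx hr)).div (hf r (hsub hx hr)) (hf_ne r (hsub hx hr)))
      ((((hP'_cont.mul hf_cont).sub (hP_cont.mul hf'_cont)).div (hf_cont.pow 2)
        fun r hr => pow_ne_zero 2 (hf_ne r hr)).mono (hsub hx)).intervalIntegrable
  rw [← intervalIntegral.integral_congr fun r hr =>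
    congrArg (· / f r ^ 2) (hwronskian (hsub hx hr)), hquotient, add_sub_cancel,
    mul_div_cancel₀ _ (hf_ne x hx)]

variable (f : ℝ → ℂ)

theorem formalPower_zero : formalPower f 0 = f := by
  ext x
  simp [formalPower, formalXt]

theorem formalPower_one (x : ℝ) : formalPower f 1 x = f x * ∫ s in (0 : ℝ)..x, 1 / f s ^ 2 := by
  simp [formalPower, formalX]

theorem formalPower_add_two (k : ℕ) (x : ℝ) :
    formalPower f (k + 2) x = f x * ∫ s in (0 : ℝ)..x,
      (∫ t in (0 : ℝ)..s, ((k + 2) * (k + 1) * formalPower f k t) * f t) / f s ^ 2 := by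
  have hconst (Y : ℝ → ℂ) : f x * (((k + 1 : ℕ) + 1) * ∫ s in (0 : ℝ)..x,
      ((k + 1) * ∫ t in (0 : ℝ)..s, Y t * f t ^ 2) * (f s ^ 2)⁻¹) = f x * ∫ s in (0 : ℝ)..x,
      (∫ t in (0 : ℝ)..s, ((k + 2) * (k + 1) * (f t * Y t)) * f t) / f s ^ 2 := by
    have hinner (s : ℝ) : ∫ t in (0 : ℝ)..s, ((k + 2) * (k + 1) * (f t * Y t)) * f t =
        (k + 2) * (k + 1) * ∫ t in (0 : ℝ)..s, Y t * f t ^ 2 := by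
      rw [← intervalIntegral.integral_const_mul]
      congr with t
      ring
    rw [← intervalIntegral.integral_const_mul]
    congr 2 with s
    rw [hinner]
    push_cast
    ring
  rcases k.even_or_odd with hk | hk
  · have hk₂ : ¬Odd (k + 2) := Nat.not_odd_iff_even.2 (hk.add even_two)
    simp only [formalPower, hk₂, Nat.not_odd_iff_even.2 hk, if_false, formalXt, hk.neg_one_pow,
      hk.add_one.neg_one_pow, zpow_neg, zpow_one, hconst]
  · have hk₂ : Odd (k + 2) := hk.add_even even_two
    simp only [formalPower, hk, hk₂, if_true, formalX, hk.add_one.neg_one_pow,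
      hk.add_one.add_one.neg_one_pow, zpow_neg, zpow_one, hconst]

variable {f}
variable {K H : ℝ → ℝ → ℂ} {q f' : ℝ → ℂ}

theorem transmute_const_mul (c : ℂ) (u : ℝ → ℂ) (x : ℝ) :
    transmute K (fun t => c * u t) x = c * transmute K u x := by
  simp only [transmute, volterra, mul_left_comm, intervalIntegral.integral_const_mul, mul_add]

theorem transmute_zero (u : ℝ → ℂ) : transmute K u 0 = u 0 := by
  simp [transmute, volterra]

theorem IsGoursatSolution.transmute_eq_mul_integral (hH : IsGoursatSolution q H)
    (hq : Continuous q) {s : Set ℝ} (hs : s.OrdConnected) (h₀ : 0 ∈ s)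
    (hf : ∀ x ∈ s, HasDerivAt f (f' x) x) (hf' : ∀ x ∈ s, HasDerivAt f' (q x * f x) x)
    (hf₀ : f 0 = 1) (hf'₀ : f' 0 = 0) (hf_ne : ∀ x ∈ s, f x ≠ 0) {u u' u'' : ℝ → ℂ}
    (hu : ∀ x, HasDerivAt u (u' x) x) (hu' : ∀ x, HasDerivAt u' (u'' x) x)
    (hu'' : Continuous u'') {x : ℝ} (hx : x ∈ s) :
    transmute (goursatKernel H) u x = f x * (u 0 + ∫ r in (0 : ℝ)..x,
      (u' 0 + ∫ t in (0 : ℝ)..r, transmute (goursatKernel H) u'' t * f t) / f r ^ 2) := by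
  have := hH.continuous_goursatKernel
  simpa [hf₀, hf'₀, transmute_zero, duhamel] using
    eq_mul_integral_of_hasDerivAt hs h₀ hx hf hf' hf_ne
    (fun x _ => hH.hasDerivAt_transmute hq hu x)
    (fun x _ => hH.hasDerivAt_deriv_transmute hq hu hu' hu'' x)
    (Continuous.continuousOn (by fun_prop))

theorem hasDerivAt_ofReal_pow (k : ℕ) (x : ℝ) :
    HasDerivAt (fun t : ℝ => (t : ℂ) ^ k) (k * (x : ℂ) ^ (k - 1)) x :=
  (hasDerivAt_pow k (x : ℂ)).comp_ofReal

theorem IsGoursatSolution.transmute_pow (hH : IsGoursatSolution q H) (hq : Continuous q)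
    {s : Set ℝ} (hs : s.OrdConnected) (h₀ : 0 ∈ s)
    (hf : ∀ x ∈ s, HasDerivAt f (f' x) x) (hf' : ∀ x ∈ s, HasDerivAt f' (q x * f x) x)
    (hf₀ : f 0 = 1) (hf'₀ : f' 0 = 0) (hf_ne : ∀ x ∈ s, f x ≠ 0) (k : ℕ) {x : ℝ} (hx : x ∈ s) :
    transmute (goursatKernel H) (fun t => (t : ℂ) ^ k) x = formalPower f k x := by
  have hsub {x : ℝ} (hx : x ∈ s) : uIcc 0 x ⊆ s := hs.uIcc_subset h₀ hx
  have hrec (k : ℕ) {x : ℝ} (hx : x ∈ s) := hH.transmute_eq_mul_integral hq hs h₀ hf hf' hf₀ hf'₀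
    hf_ne (hasDerivAt_ofReal_pow k) (fun x => (hasDerivAt_ofReal_pow (k - 1) x).const_mul _)
    (by fun_prop) hx
  simp only [transmute_const_mul] at hrec
  induction k using Nat.twoStepInduction generalizing x with
  | zero =>
    rw [hrec 0 hx]
    simp [formalPower_zero]
  | one =>
    rw [hrec 1 hx]
    simp [formalPower_one]
  | more k ih _ =>
    rw [hrec (k + 2) hx, formalPower_add_two]
    have hinner {r : ℝ} (hr : r ∈ s) : (∫ t in (0 : ℝ)..r,
          ((k + 2) * (k + 1) * transmute (goursatKernel H) (fun t => (t : ℂ) ^ k) t) * f t) =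
        ∫ t in (0 : ℝ)..r, ((k + 2) * (k + 1) * formalPower f k t) * f t :=
      intervalIntegral.integral_congr fun t ht => by simp only [ih (hsub hr ht)]
    rw [← intervalIntegral.integral_congr fun r hr => congrArg (· / f r ^ 2) (hinner (hsub hx hr))]
    simp [mul_assoc]

end FormalPowers

section Reflection

/-- Extension of `g` from `[a, b]` by odd reflection in the points `(a, g a)` and `(b, g b)` of its
graph. It keeps one-sided derivatives at `a` and `b`, and it agrees with `g` on `[a, b]`; the values
are meaningful within distance `b - a` of `[a, b]`. -/
def oddReflection {E : Type*} [AddCommGroup E] [Module ℝ E] (a b : ℝ) (g : ℝ → E) (s : ℝ) : E :=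
  (2 : ℝ) • g (max a (min b s)) - g (2 * max a (min b s) - s)

theorem oddReflection_of_mem {E : Type*} [AddCommGroup E] [Module ℝ E] {a b s : ℝ}
    (g : ℝ → E) (hs : s ∈ Icc a b) : oddReflection a b g s = g s := by
  rw [oddReflection, min_eq_right hs.2, max_eq_right hs.1, two_mul, add_sub_cancel_right, two_smul,
    add_sub_cancel_right]

theorem abs_two_mul_clamp_sub_sub_le {a b x : ℝ} (hx : x ∈ Icc a b) (s : ℝ) :
    |2 * max a (min b s) - s - x| ≤ |s - x| := by
  obtain ⟨hax, hxb⟩ := hx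
  rw [abs_le']
  grind

theorem hasDerivAt_oddReflection {E : Type*} [NormedAddCommGroup E] [NormedSpace ℝ E]
    {a b x : ℝ} {g : ℝ → E} {g' : E} (hab : a < b) (hx : x ∈ Icc a b)
    (hg : HasDerivWithinAt g g' (Icc a b) x) : HasDerivAt (oddReflection a b g) g' x := by
  have hcomp {p : ℝ → ℝ} (hp : ∀ s, |p s - x| ≤ |s - x|) (hmem : ∀ᶠ s in 𝓝 x, p s ∈ Icc a b) :
      (fun s => g (p s) - g x - (p s - x) • g') =o[𝓝 x] fun s => s - x := by
    have hp_tendsto : Tendsto p (𝓝 x) (𝓝 x) := by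
      refine tendsto_iff_norm_sub_tendsto_zero.2 (squeeze_zero (fun s => norm_nonneg _) hp ?_)
      exact tendsto_iff_norm_sub_tendsto_zero.1 tendsto_id
    exact (hg.isLittleO.comp_tendsto (tendsto_nhdsWithin_iff.2 ⟨hp_tendsto, hmem⟩)).trans_isBigO
      (.of_bound' (.of_forall hp))
  have hclamp := hcomp (p := fun s => max a (min b s)) (fun s => by grind)
    (.of_forall fun s => by grind)
  have hreflect := hcomp (p := fun s => 2 * max a (min b s) - s) (abs_two_mul_clamp_sub_sub_le hx)
    (by
      filter_upwards [Ioo_mem_nhds (sub_lt_self x (sub_pos.2 hab))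
        (lt_add_of_pos_right x (sub_pos.2 hab))] with s hs
      grind)
  refine .of_isLittleO (((hclamp.const_smul_left (2 : ℝ)).sub hreflect).congr_left fun s => ?_)
  rw [oddReflection_of_mem g hx, oddReflection]
  simp only [Pi.smul_apply]
  module

theorem mem_uIcc_neg_self {x t : ℝ} : t ∈ uIcc (-x) x ↔ |t| ≤ |x| := by
  rw [Set.mem_uIcc, abs_le]
  grind

theorem integral_indicator_uIcc_neg_self {E : Type*} [NormedAddCommGroup E] [NormedSpace ℝ E]
    {x s : ℝ} (hx : x ∈ uIcc 0 s) (g : ℝ → E) :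
    ∫ t in (-s)..s, (uIcc (-x) x).indicator g t = ∫ t in (-x)..x, g t := by
  have hnonneg {x s : ℝ} (hx₀ : 0 ≤ x) (hxs : x ≤ s) :
      ∫ t in (-s)..s, (uIcc (-x) x).indicator g t = ∫ t in (-x)..x, g t := by
    rw [intervalIntegral.integral_of_le (by linarith),
      intervalIntegral.integral_of_le (by linarith), ← integral_Icc_eq_integral_Ioc,
      ← integral_Icc_eq_integral_Ioc,
      setIntegral_indicator measurableSet_uIcc, Set.uIcc_of_le (by linarith), Icc_inter_Icc]
    grind
  rcases le_total 0 s with hs | hs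
  · rw [Set.uIcc_of_le hs] at hx
    exact hnonneg hx.1 hx.2
  · rw [Set.uIcc_of_ge hs] at hx
    have := hnonneg (neg_nonneg.2 hx.2) (neg_le_neg hx.1)
    rw [neg_neg, neg_neg, Set.uIcc_comm] at this
    rw [intervalIntegral.integral_symm, this, ← intervalIntegral.integral_symm]

/-- The kernel `k` on `|t| ≤ |s| ≤ b`, extended to `|s| > b` so that its Volterra operator is
extended by odd reflection. -/
def reflectedKernel (b : ℝ) (k : ℝ → ℝ → ℂ) (s t : ℝ) : ℂ :=
  oddReflection (-b) b (fun x => (uIcc (-x) x).indicator (k x) t) s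

theorem reflectedKernel_of_abs_le {b s t : ℝ} (k : ℝ → ℝ → ℂ) (ht : |t| ≤ |s|) (hs : |s| ≤ b) :
    reflectedKernel b k s t = k s t := by
  rw [reflectedKernel, oddReflection_of_mem _ (abs_le.1 hs),
    indicator_of_mem (mem_uIcc_neg_self.2 ht)]

theorem volterra_reflectedKernel {b s : ℝ} {k : ℝ → ℝ → ℂ} {u : ℝ → ℂ}
    (hku : ∀ x ∈ Icc (-b) b, IntervalIntegrable (fun t => k x t * u t) volume (-x) x)
    (hs : |s| < 2 * b) :
    volterra (reflectedKernel b k) u s = oddReflection (-b) b (volterra k u) s := by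
  obtain ⟨hs_neg, hs_pos⟩ := abs_lt.1 hs
  have hclamp : max (-b) (min b s) ∈ Icc (-b) b ∩ uIcc 0 s := by
    rw [mem_inter_iff, Set.mem_uIcc]
    grind
  have hreflect : 2 * max (-b) (min b s) - s ∈ Icc (-b) b ∩ uIcc 0 s := by
    rw [mem_inter_iff, Set.mem_uIcc]
    grind
  have hindicator {x : ℝ} (hx : x ∈ uIcc 0 s) :
      ∫ t in (-s)..s, (uIcc (-x) x).indicator (k x) t * u t = volterra k u x := by
    simp only [← indicator_mul_left]
    exact integral_indicator_uIcc_neg_self hx (fun t => k x t * u t)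
  have hint {x : ℝ} (hx : x ∈ Icc (-b) b) :
      IntervalIntegrable (fun t => (uIcc (-x) x).indicator (k x) t * u t) volume (-s) s := by
    simp only [← indicator_mul_left]
    exact ((integrable_indicator_iff measurableSet_uIcc).2
      ((intervalIntegrable_iff').1 (hku x hx))).intervalIntegrable
  simp only [volterra, reflectedKernel, oddReflection, sub_mul, smul_mul_assoc]
  refine (intervalIntegral.integral_sub ((hint hclamp.1).smul (2 : ℝ)) (hint hreflect.1)).trans ?_
  simp only [Pi.smul_apply, intervalIntegral.integral_smul]
  rw [hindicator hclamp.2, hindicator hreflect.2]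
  rfl

end Reflection

section Intertwining

theorem exists_continuous_bounded_eqOn_Icc {E : Type*} [NormedAddCommGroup E] {a b : ℝ}
    (hab : a ≤ b) {g : ℝ → E} (hg : ContinuousOn g (Icc a b)) :
    ∃ G : ℝ → E, Continuous G ∧ (∃ M, ∀ x, ‖G x‖ ≤ M) ∧ EqOn G g (Icc a b) := by
  obtain ⟨M, hM⟩ := isCompact_Icc.exists_bound_of_continuousOn hg
  exact ⟨IccExtend hab ((Icc a b).domRestrict g), hg.domRestrict.Icc_extend',
    ⟨M, fun x => hM _ (projIcc a b hab x).2⟩, fun x hx => IccExtend_of_mem hab _ hx⟩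

theorem exists_hasDerivAt_eqOn {E : Type*} [NormedAddCommGroup E] [NormedSpace ℝ E]
    [CompleteSpace E] {s : Set ℝ} (hs : s.OrdConnected) {a : ℝ} (ha : a ∈ s) {u u' v' : ℝ → E}
    (hu : ∀ x ∈ s, HasDerivAt u (u' x) x) (hv' : Continuous v') (hv'u : EqOn v' u' s) :
    ∃ v, (∀ x, HasDerivAt v (v' x) x) ∧ EqOn v u s := by
  refine ⟨fun x => u a + ∫ t in a..x, v' t,
    fun x => (hv'.integral_hasStrictDerivAt a x).hasDerivAt.const_add _, fun x hx => ?_⟩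
  have hsub : uIcc a x ⊆ s := hs.uIcc_subset ha hx
  have hftc : ∫ t in a..x, v' t = u x - u a := intervalIntegral.integral_eq_sub_of_hasDerivAt
    (fun t ht => (hu t (hsub ht)).congr_deriv (hv'u (hsub ht)).symm) (hv'.intervalIntegrable a x)
  simp only [hftc, add_sub_cancel]

theorem volterra_congr {k K : ℝ → ℝ → ℂ} {u v : ℝ → ℂ} {x : ℝ} (hk : EqOn (k x) (K x) (uIcc (-x) x))
    (huv : EqOn u v (uIcc (-x) x)) : volterra k u x = volterra K v x :=
  intervalIntegral.integral_congr fun t ht => by simp only [hk ht, huv ht]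

variable {b : ℝ} {q u u' u'' : ℝ → ℂ} {H : ℝ → ℝ → ℂ}

theorem uIcc_neg_self_subset {x : ℝ} (hx : x ∈ Icc (-b) b) : uIcc (-x) x ⊆ Icc (-b) b :=
  fun _ ht => abs_le.1 ((mem_uIcc_neg_self.1 ht).trans (abs_le.2 hx))

theorem transmute_reflectedKernel_of_eqOn (k : ℝ → ℝ → ℂ) {v : ℝ → ℂ} (hvu : EqOn v u (Icc (-b) b))
    {x : ℝ} (hx : x ∈ Icc (-b) b) : transmute (reflectedKernel b k) u x = transmute k v x :=
  congrArg₂ (· + ·) (hvu hx).symm <| volterra_congr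
    (fun _ ht => reflectedKernel_of_abs_le k (mem_uIcc_neg_self.1 ht) (abs_le.2 hx))
    (hvu.symm.mono (uIcc_neg_self_subset hx))

namespace IsGoursatSolution

theorem hasDerivAt_volterra_reflectedKernel (hH : IsGoursatSolution q H) (hq : Continuous q)
    (hb : 0 < b) {v : ℝ → ℂ} (hv : Continuous v) (hvu : EqOn v u (Icc (-b) b)) {x : ℝ}
    (hx : x ∈ Icc (-b) b) :
    HasDerivAt (volterra (reflectedKernel b (goursatKernel H)) u)
      (duhamel q (goursatKernel H) (evenShift v) x) x := by
  have := hH.continuous_goursatKernel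
  have hvolterra {y : ℝ} (hy : y ∈ Icc (-b) b) :
      volterra (goursatKernel H) u y = volterra (goursatKernel H) v y :=
    volterra_congr (fun _ _ => rfl) (hvu.symm.mono (uIcc_neg_self_subset hy))
  have hint (y : ℝ) (hy : y ∈ Icc (-b) b) :
      IntervalIntegrable (fun t => goursatKernel H y t * u t) volume (-y) y :=
    ContinuousOn.intervalIntegrable <| Continuous.continuousOn (by fun_prop) |>.mul <|
      (hv.continuousOn.congr hvu.symm).mono (uIcc_neg_self_subset hy)
  have hwithin : HasDerivWithinAt (volterra (goursatKernel H) u)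
      (duhamel q (goursatKernel H) (evenShift v) x) (Icc (-b) b) x :=
    (hH.hasDerivAt_volterra hq hv x).hasDerivWithinAt.congr (fun _ => hvolterra) (hvolterra hx)
  have hx_lt : |x| < 2 * b := (abs_le.2 hx).trans_lt (by linarith)
  refine (hasDerivAt_oddReflection (by linarith) hx hwithin).congr_of_eventuallyEq ?_
  filter_upwards [continuous_abs.isOpen_preimage _ isOpen_Iio |>.mem_nhds hx_lt] with s hs
  exact volterra_reflectedKernel hint hs

theorem exists_deriv_transmute_reflectedKernel (hH : IsGoursatSolution q H) (hq : Continuous q)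
    (hb : 0 < b) (hu : ∀ x ∈ Icc (-b) b, HasDerivAt u (u' x) x)
    (hu' : ∀ x ∈ Icc (-b) b, HasDerivAt u' (u'' x) x) (hu'' : ContinuousOn u'' (Icc (-b) b)) :
    ∃ D₁ D₂ : ℝ → ℂ,
      (∀ x ∈ Icc (-b) b,
        HasDerivAt (transmute (reflectedKernel b (goursatKernel H)) u) (D₁ x) x) ∧
      (∀ x ∈ Icc (-b) b, HasDerivAt D₁ (D₂ x) x) ∧ ContinuousOn D₂ (Icc (-b) b) ∧
      ∀ x ∈ Icc (-b) b, D₂ x - q x * transmute (reflectedKernel b (goursatKernel H)) u x =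
        transmute (reflectedKernel b (goursatKernel H)) u'' x := by
  have := hH.continuous_goursatKernel
  have hord : (Icc (-b) b).OrdConnected := ordConnected_Icc
  have h₀ : (0 : ℝ) ∈ Icc (-b) b := ⟨by linarith, hb.le⟩
  have hcont {g g' : ℝ → ℂ} (hg : ∀ x, HasDerivAt g (g' x) x) : Continuous g :=
    continuous_iff_continuousAt.2 fun x => (hg x).continuousAt
  obtain ⟨v'', hv'', -, hv''u⟩ := exists_continuous_bounded_eqOn_Icc (by linarith) hu''
  obtain ⟨v', hv', hv'u⟩ := exists_hasDerivAt_eqOn hord h₀ hu' hv'' hv''u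
  obtain ⟨v, hv, hvu⟩ := exists_hasDerivAt_eqOn hord h₀ hu (hcont hv') hv'u
  have hv_cont := hcont hv
  refine ⟨fun x => v' x + duhamel q (goursatKernel H) (evenShift v) x,
    fun x => q x * transmute (goursatKernel H) v x + transmute (goursatKernel H) v'' x,
    fun x hx => ?_, fun x _ => hH.hasDerivAt_deriv_transmute hq hv hv' hv'' x,
    Continuous.continuousOn (by fun_prop), fun x hx => ?_⟩
  · simp only [hv'u hx]
    exact (hu x hx).add (hH.hasDerivAt_volterra_reflectedKernel hq hb hv_cont hvu hx)
  · rw [transmute_reflectedKernel_of_eqOn _ hvu hx, transmute_reflectedKernel_of_eqOn _ hv''u hx,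
      add_sub_cancel_left]

end IsGoursatSolution

end Intertwining

section Hermite

theorem natDegree_hermitePhys_le (n : ℕ) : (hermitePhys n).natDegree ≤ n := by
  induction n with
  | zero => simp [hermitePhys]
  | succ n ih =>
    rw [hermitePhys]
    compute_degree
    grind [Polynomial.natDegree_derivative_le]

theorem volterra_polynomial {K : ℝ → ℝ → ℂ} {x : ℝ} (hK : ContinuousOn (K x) (uIcc (-x) x))
    {p : Polynomial ℝ} {n : ℕ} (hp : p.natDegree < n) :
    volterra K (fun t => ((p.eval t : ℝ) : ℂ)) x =
      ∑ k ∈ range n, (p.coeff k : ℂ) * volterra K (fun t => (t : ℂ) ^ k) x := by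
  have heval (t : ℝ) : ((p.eval t : ℝ) : ℂ) = ∑ k ∈ range n, (p.coeff k : ℂ) * (t : ℂ) ^ k := by
    rw [Polynomial.eval_eq_sum_range' hp]
    push_cast
    rfl
  have hint (k : ℕ) : IntervalIntegrable (fun t => (p.coeff k : ℂ) * (K x t * (t : ℂ) ^ k))
      volume (-x) x :=
    ((hK.mul (by fun_prop)).intervalIntegrable).const_mul _
  simp only [volterra, heval, Finset.mul_sum, mul_left_comm (K x _)]
  rw [intervalIntegral.integral_finsetSum fun k _ => hint k]
  simp only [intervalIntegral.integral_const_mul]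

theorem sqrt_pi_mul_factorial_mul_cCoef (f : ℝ → ℂ) (n : ℕ) (x : ℝ) :
    (Real.sqrt Real.pi : ℂ) * n.factorial * 2 ^ n * cCoef f n x =
      ∑ k ∈ range (n + 1), ((hermitePhys n).coeff k : ℂ) * (formalPower f k x - (x : ℂ) ^ k) := by
  have hπ : (Real.sqrt Real.pi : ℂ) ≠ 0 := ofReal_ne_zero.2 (Real.sqrt_pos.2 Real.pi_pos).ne'
  have hn : (n.factorial : ℂ) ≠ 0 := Nat.cast_ne_zero.2 n.factorial_ne_zero
  rw [cCoef, ← mul_assoc,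
    mul_one_div_cancel (mul_ne_zero (mul_ne_zero hπ hn) (pow_ne_zero n two_ne_zero)), one_mul]

end Hermite

/-- Hermite moments of the transmutation kernel. -/
theorem transmutation_kernel_hermite_moments
    (b : ℝ) (hb : 0 < b) (q : ℝ → ℂ) (hq : ContinuousOn q (Set.Icc (-b) b))
    (f f' : ℝ → ℂ)
    (hf : ∀ x ∈ Set.Icc (-b) b, HasDerivAt f (f' x) x)
    (hf' : ∀ x ∈ Set.Icc (-b) b, HasDerivAt f' (q x * f x) x)
    (hf0 : f 0 = 1) (hf'0 : f' 0 = 0)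
    (hfne : ∀ x ∈ Set.Icc (-b) b, f x ≠ 0) :
    ∃ K : ℝ → ℝ → ℂ,
      ContinuousOn (fun p : ℝ × ℝ => K p.1 p.2) {p : ℝ × ℝ | |p.2| ≤ |p.1| ∧ |p.1| ≤ b} ∧
      (      ∀ u u' u'' : ℝ → ℂ,
        (∀ x ∈ Set.Icc (-b) b, HasDerivAt u (u' x) x) →
        (∀ x ∈ Set.Icc (-b) b, HasDerivAt u' (u'' x) x) →
        ContinuousOn u'' (Set.Icc (-b) b) →
        ∃ D1 D2 : ℝ → ℂ,
          (∀ x ∈ Set.Icc (-b) b,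
            HasDerivAt (fun s : ℝ => u s + ∫ t in (-s)..s, K s t * u t) (D1 x) x) ∧
          (∀ x ∈ Set.Icc (-b) b, HasDerivAt D1 (D2 x) x) ∧
          ContinuousOn D2 (Set.Icc (-b) b) ∧
          ∀ x ∈ Set.Icc (-b) b,
            D2 x - q x * (u x + ∫ t in (-x)..x, K x t * u t)
              = u'' x + ∫ t in (-x)..x, K x t * u'' t) ∧
      ∀ (n : ℕ), ∀ x ∈ Set.Ioc (0:ℝ) b,
        (∫ t in (-x)..x, K x t * (((hermitePhys n).eval t : ℝ) : ℂ)) =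
          (∑ k ∈ Finset.range (n + 1), ((hermitePhys n).coeff k : ℂ) *
            (formalPower f k x - (x : ℂ) ^ k)) ∧
        (∫ t in (-x)..x, K x t * (((hermitePhys n).eval t : ℝ) : ℂ)) =
          (Real.sqrt Real.pi : ℂ) * (n.factorial : ℂ) * 2 ^ n * cCoef f n x := by
  obtain ⟨Q, hQ, ⟨M, hM⟩, hQq⟩ := exists_continuous_bounded_eqOn_Icc (by linarith) hq
  obtain ⟨H, hH⟩ := exists_isGoursatSolution hQ hM
  have hf'Q (x : ℝ) (hx : x ∈ Icc (-b) b) : HasDerivAt f' (Q x * f x) x := by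
    rw [hQq hx]
    exact hf' x hx
  have hK : ContinuousOn (uncurry (reflectedKernel b (goursatKernel H)))
      {p : ℝ × ℝ | |p.2| ≤ |p.1| ∧ |p.1| ≤ b} :=
    hH.continuous_goursatKernel.continuousOn.congr fun p hp => reflectedKernel_of_abs_le _ hp.1 hp.2
  refine ⟨reflectedKernel b (goursatKernel H), hK, fun u u' u'' hu hu' hu'' => ?_, fun n x hx => ?_⟩
  · obtain ⟨D₁, D₂, hD₁, hD₂, hD₂_cont, hD₂_eq⟩ :=
      hH.exists_deriv_transmute_reflectedKernel hQ hb hu hu' hu''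
    exact ⟨D₁, D₂, hD₁, hD₂, hD₂_cont, fun x hx => hQq hx ▸ hD₂_eq x hx⟩
  · have hx_mem : x ∈ Icc (-b) b := ⟨by linarith [hx.1], hx.2⟩
    have hpow (k : ℕ) : volterra (reflectedKernel b (goursatKernel H)) (fun t => (t : ℂ) ^ k) x =
        formalPower f k x - (x : ℂ) ^ k :=
      eq_sub_of_add_eq' <| (transmute_reflectedKernel_of_eqOn _ (eqOn_refl _ _) hx_mem).trans <|
        hH.transmute_pow hQ ordConnected_Icc ⟨by linarith, hb.le⟩ hf hf'Q hf0 hf'0 hfne k hx_mem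
    have hmoment := volterra_polynomial (hK.comp (f := fun t => (x, t)) (by fun_prop)
      fun t ht => ⟨mem_uIcc_neg_self.1 ht, abs_le.2 hx_mem⟩)
      (Nat.lt_succ_of_le (natDegree_hermitePhys_le n))
    simp only [hpow] at hmoment
    exact ⟨hmoment, hmoment.trans (sqrt_pi_mul_factorial_mul_cCoef f n x).symm⟩

end
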